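/- Let S = {s1, …, sk} be a set of strings of length n over Σ such that C_S is nonempty, i.e., some string of length n is matching with every string of S. Then S admits a disentanglement: there exists a set S' = {s'_1, …, s'_k} of strings of length n over Σ such that (i) the strings of S' are pairwise matching, and (ii) for each i, the strings s_i and s'_i are matching and π(s_i, s'_i) contains only swaps that are necessary for s_i. -/

import Mathlib

/-!
Strings of length `n` over an alphabet `α` are modelled as functions `ℕ → α`,
where only the values at positions `0, …, n-1` (0-indexed) are relevant.
A swap at (0-indexed) position `p` exchanges the letters at positions `p` and `p+1`.
A swap permutation is modelled as a `Finset ℕ` of swap positions, pairwise at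
distance ≥ 2 (equivalently: containing no two consecutive positions).
-/

universe u

variable {α : Type u}

/-- `P` is a swap permutation for strings of length `n`: every swap position is in range
and no two swaps overlap (positions are pairwise at distance ≥ 2). -/
def IsSwapSet (n : ℕ) (P : Finset ℕ) : Prop :=
  (∀ p ∈ P, p + 1 < n) ∧ (∀ p ∈ P, p + 1 ∉ P)

/-- Apply a set of pairwise disjoint swaps to a string. -/
def applySwaps (P : Finset ℕ) (s : ℕ → α) : ℕ → α := fun i =>
  if i ∈ P then s (i + 1)
  else if 0 < i ∧ i - 1 ∈ P then s (i - 1)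
  else s i

/-- The swap permutation `P` transforms `s1` into `s2` (as length-`n` strings). -/
def Transforms (n : ℕ) (P : Finset ℕ) (s1 s2 : ℕ → α) : Prop :=
  IsSwapSet n P ∧ ∀ i < n, applySwaps P s1 i = s2 i

/-- Two length-`n` strings are matching if some swap permutation transforms one
into the other. -/
def SwMatching (n : ℕ) (s1 s2 : ℕ → α) : Prop :=
  ∃ P : Finset ℕ, Transforms n P s1 s2

/-- `P` is a *valid* swap permutation transforming `s1` into `s2`:
it transforms `s1` into `s2` and never swaps two identical letters. -/
def ValidTransform (n : ℕ) (P : Finset ℕ) (s1 s2 : ℕ → α) : Prop :=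
  Transforms n P s1 s2 ∧ ∀ p ∈ P, s1 p ≠ s1 (p + 1)

/-- Hamming distance of two length-`n` strings. -/
noncomputable def hamDist {β : Type*} (n : ℕ) (s t : ℕ → β) : ℕ :=
  letI : DecidablePred (fun i => s i ≠ t i) := fun _ => Classical.propDecidable _
  ((Finset.range n).filter (fun i => s i ≠ t i)).card

/-- Swap distance: the number of swaps of the valid swap permutation transforming
`s1` into `s2` (unique when it exists), and `⊤` if the strings are not matching. -/
noncomputable def swapDist (n : ℕ) (s1 s2 : ℕ → α) : ℕ∞ :=
  sInf {m : ℕ∞ | ∃ P : Finset ℕ, ValidTransform n P s1 s2 ∧ m = (P.card : ℕ∞)}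

/-- Swap+Hamming distance: minimum over all length-`n` strings `t` of
`∂S(s1,t) + ∂Ham(t,s2)`. -/
noncomputable def shDist (n : ℕ) (s1 s2 : ℕ → α) : ℕ∞ :=
  ⨅ t : ℕ → α, swapDist n s1 t + (hamDist n t s2 : ℕ∞)

/-- Number of occurrences of the letter `x` at positions `a ≤ i < b` of the string `s`. -/
noncomputable def countIn {β : Type*} (s : ℕ → β) (a b : ℕ) (x : β) : ℕ :=
  letI : DecidablePred (fun i => s i = x) := fun _ => Classical.propDecidable _
  ((Finset.Ico a b).filter (fun i => s i = x)).card

/-- Greedy (left-to-right) swap set between two strings: position `p` is greedily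
swapped iff `s1[p] = s2[p+1]`, `s1[p+1] = s2[p]`, `s1[p] ≠ s1[p+1]`, and position
`p-1` was not swapped. -/
def greedyMem (s1 s2 : ℕ → α) : ℕ → Prop
  | 0 => s1 0 = s2 1 ∧ s1 1 = s2 0 ∧ s1 0 ≠ s1 1
  | p + 1 => (s1 (p + 1) = s2 (p + 2) ∧ s1 (p + 2) = s2 (p + 1) ∧ s1 (p + 1) ≠ s1 (p + 2))
      ∧ ¬ greedyMem s1 s2 p

/-- The greedy swap set `G(s1,s2)` restricted to the valid positions `0, …, n-2`. -/
noncomputable def greedySet (n : ℕ) (s1 s2 : ℕ → α) : Finset ℕ :=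
  letI : DecidablePred (greedyMem s1 s2) := fun _ => Classical.propDecidable _
  (Finset.range (n - 1)).filter (greedyMem s1 s2)

/-- `SW(S, t, i)`: the set of indices `j` such that `t` and `s j` have a greedy swap
at position `i`. -/
noncomputable def SW (n : ℕ) {k : ℕ} (s : Fin k → ℕ → α) (t : ℕ → α) (i : ℕ) :
    Finset (Fin k) :=
  letI : DecidablePred (fun j : Fin k => i ∈ greedySet n t (s j)) :=
    fun _ => Classical.propDecidable _
  Finset.univ.filter (fun j => i ∈ greedySet n t (s j))

/-- The swap `(p, p+1)` is necessary for the input string `s i` if every string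
matching all strings of `S` has a swap at position `p` in its valid swap
permutation towards `s i`. -/
def NecessarySwap (n : ℕ) {k : ℕ} (s : Fin k → ℕ → α) (i : Fin k) (p : ℕ) : Prop :=
  ∀ t : ℕ → α, (∀ j, SwMatching n t (s j)) →
    ∀ P : Finset ℕ, ValidTransform n P t (s i) → p ∈ P

/-- Lexicographic strict order on length-`n` strings. -/
def LexLt {β : Type*} [LinearOrder β] (n : ℕ) (s t : ℕ → β) : Prop :=
  ∃ i < n, s i < t i ∧ ∀ j < i, s j = t j

/-!
Fix `c ∈ C_S` and valid swap permutations `P i` from `c` to `s i`. Undo in `s i` exactly those swaps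
`p ∈ P i` for which some `P j` swaps at `p + 1`. No two of the remaining swaps, over all `i`, are at
consecutive positions, so the resulting strings are pairwise matching.

An undone swap is necessary. Let `x y z` be the letters of `c` at `p`, `p + 1`, `p + 2`, so `x ≠ y`
and `y ≠ z`, and let `A` be the multiset of letters of `c` before `p`. A swap permutation changes
the multiset of the first `m + 1` letters only by a swap at `m`. Hence the first `p + 1` letters are
`A + {y}` in `s i` and `A + {x}` in `s j`, and the first `p + 2` letters of `s j` are `A + {x, z}`.
A string `t` reaching `s i` without a swap at `p` starts with `A + {y}`; to reach `s j` it must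
then swap at `p`, hence not at `p + 1`, so its first `p + 2` letters are `A + {x, z}`, which leaves
no room for the extra `y`.
-/

theorem IsSwapSet.mono {n : ℕ} {P Q : Finset ℕ} (hQ : IsSwapSet n Q) (hPQ : P ⊆ Q) :
    IsSwapSet n P :=
  ⟨fun p hp => hQ.1 p (hPQ hp), fun p hp hp' => hQ.2 p (hPQ hp) (hPQ hp')⟩

section ApplySwaps

variable {n p i : ℕ} {P Q : Finset ℕ} {s t : ℕ → α}

theorem applySwaps_of_mem (hp : p ∈ P) : applySwaps P s p = s (p + 1) :=
  if_pos hp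

theorem applySwaps_succ_of_mem (hp : p ∈ P) (hp' : p + 1 ∉ P) :
    applySwaps P s (p + 1) = s p := by
  simp [applySwaps, hp, hp']

theorem applySwaps_succ_of_notMem (hp : p ∉ P) (hp' : p + 1 ∉ P) :
    applySwaps P s (p + 1) = s (p + 1) := by
  simp [applySwaps, hp, hp']

theorem applySwaps_congr (hP : IsSwapSet n P) (hst : ∀ i < n, s i = t i) (hi : i < n) :
    applySwaps P s i = applySwaps P t i := by
  unfold applySwaps
  split_ifs with hmem
  · exact hst _ (hP.1 i hmem)
  · exact hst _ (by omega)
  · exact hst i hi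

theorem applySwaps_applySwaps (hPQ : ∀ p ∈ P ∪ Q, p + 1 ∉ P ∪ Q) (s : ℕ → α) :
    applySwaps Q (applySwaps P s) = applySwaps (symmDiff P Q) s := by
  ext i
  simp only [Finset.mem_union] at hPQ
  rcases i with _ | _ | i <;>
    simp only [applySwaps, Finset.mem_symmDiff, Nat.add_sub_cancel, Nat.succ_pos, true_and] <;>
    grind

open Classical in
theorem applySwaps_filter_ne (hP : ∀ p ∈ P, p + 1 ∉ P) (s : ℕ → α) :
    applySwaps (P.filter fun p => s p ≠ s (p + 1)) s = applySwaps P s := by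
  ext i
  rcases i with _ | i <;>
    simp only [applySwaps, Finset.mem_filter, Nat.add_sub_cancel, Nat.succ_pos, true_and] <;>
    grind

end ApplySwaps

section Matching

variable {n : ℕ} {P Q : Finset ℕ} {s t c : ℕ → α}

theorem SwMatching.exists_validTransform (h : SwMatching n s t) :
    ∃ P, ValidTransform n P s t := by
  classical
  obtain ⟨P, hP, hst⟩ := h
  refine ⟨P.filter fun p => s p ≠ s (p + 1), ⟨hP.mono (Finset.filter_subset _ _), ?_⟩,
    fun p hp => (Finset.mem_filter.1 hp).2⟩
  rwa [applySwaps_filter_ne hP.2]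

theorem swMatching_applySwaps (hPQ : IsSwapSet n (P ∪ Q)) (c : ℕ → α) :
    SwMatching n (applySwaps P c) (applySwaps Q c) := by
  have hsub : symmDiff P Q ⊆ P ∪ Q := symmDiff_le_sup
  have hdisj : ∀ p ∈ P ∪ symmDiff P Q, p + 1 ∉ P ∪ symmDiff P Q :=
    (hPQ.mono (Finset.union_subset Finset.subset_union_left hsub)).2
  refine ⟨symmDiff P Q, hPQ.mono hsub, fun i _ => ?_⟩
  rw [applySwaps_applySwaps hdisj, symmDiff_symmDiff_cancel_left]

theorem ValidTransform.undo (h : ValidTransform n P c s) (hQP : Q ⊆ P) :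
    ValidTransform n Q s (applySwaps (P \ Q) c) := by
  obtain ⟨⟨hP, hcs⟩, hne⟩ := h
  have hQ : IsSwapSet n Q := hP.mono hQP
  refine ⟨⟨hQ, fun i hi => ?_⟩, fun p hp => ?_⟩
  · calc applySwaps Q s i = applySwaps Q (applySwaps P c) i :=
          (applySwaps_congr hQ hcs hi).symm
      _ = applySwaps (symmDiff P Q) c i := by
          rw [applySwaps_applySwaps (by rw [Finset.union_eq_left.2 hQP]; exact hP.2)]
      _ = applySwaps (P \ Q) c i := by rw [symmDiff_of_ge hQP]
  · have hpP := hQP hp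
    have hpn : p + 1 < n := hP.1 p hpP
    rw [← hcs p (by omega), ← hcs (p + 1) hpn, applySwaps_of_mem hpP,
      applySwaps_succ_of_mem hpP (hP.2 p hpP)]
    exact (hne p hpP).symm

end Matching

section PrefixLetters

/-- The multiset of the first `m` letters of `s`, the quantity that a swap permutation can change
only by a swap across the end of the prefix. -/
def prefixLetters (s : ℕ → α) (m : ℕ) : Multiset α :=
  (Multiset.range m).map s

theorem prefixLetters_succ (s : ℕ → α) (m : ℕ) :
    prefixLetters s (m + 1) = s m ::ₘ prefixLetters s m := by
  simp [prefixLetters]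

variable {n m p : ℕ} {P Q V W : Finset ℕ} {s s₁ s₂ t c : ℕ → α}

theorem Transforms.prefixLetters_succ_eq (h : Transforms n P s t) (hm : m < n) :
    prefixLetters t (m + 1) = (if m ∈ P then s (m + 1) else s m) ::ₘ prefixLetters s m := by
  obtain ⟨hP, hst⟩ := h
  induction m with
  | zero => simp [prefixLetters, ← hst 0 hm, applySwaps]
  | succ m ih =>
    rw [prefixLetters_succ t, ih (by omega), ← hst (m + 1) hm, prefixLetters_succ s]
    by_cases hmem : m ∈ P
    · have hmem' := hP.2 m hmem
      rw [applySwaps_succ_of_mem hmem hmem', if_pos hmem, if_neg hmem', Multiset.cons_swap]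
    · rw [if_neg hmem]
      congr 1
      split_ifs with hmem'
      · exact applySwaps_of_mem hmem'
      · exact applySwaps_succ_of_notMem hmem hmem'

theorem Transforms.prefixLetters_succ_of_mem (h : Transforms n P s t) (hp : p ∈ P) :
    prefixLetters t (p + 1) = s (p + 1) ::ₘ prefixLetters s p := by
  rw [h.prefixLetters_succ_eq (Nat.lt_of_succ_lt (h.1.1 p hp)), if_pos hp]

theorem Transforms.prefixLetters_succ_of_notMem (h : Transforms n P s t) (hm : m < n)
    (hmP : m ∉ P) : prefixLetters t (m + 1) = prefixLetters s (m + 1) := by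
  rw [h.prefixLetters_succ_eq hm, if_neg hmP, prefixLetters_succ]

theorem ValidTransform.mem_of_overlapping_swaps (hP : ValidTransform n P c s₁)
    (hQ : ValidTransform n Q c s₂) (hp : p ∈ P) (hq : p + 1 ∈ Q)
    (hV : Transforms n V t s₁) (hW : Transforms n W t s₂) : p ∈ V := by
  classical
  by_contra hpV
  have hn : p + 1 < n := hP.1.1.1 p hp
  have hpQ : p ∉ Q := fun h => hQ.1.1.2 p h hq
  have ht : prefixLetters t (p + 1) = c (p + 1) ::ₘ prefixLetters c p := by
    rw [← hV.prefixLetters_succ_of_notMem (by omega) hpV, hP.1.prefixLetters_succ_of_mem hp]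
  have hs₂ : prefixLetters s₂ (p + 1) = c p ::ₘ prefixLetters c p := by
    rw [hQ.1.prefixLetters_succ_of_notMem (by omega) hpQ, prefixLetters_succ]
  have hpW : p ∈ W := by
    by_contra hpW
    rw [hW.prefixLetters_succ_of_notMem (by omega) hpW, ht, Multiset.cons_inj_left] at hs₂
    exact hP.2 p hp hs₂.symm
  have hsucc : t (p + 1) ::ₘ c (p + 1) ::ₘ prefixLetters c p =
      c (p + 2) ::ₘ c p ::ₘ prefixLetters c p := by
    rw [← ht, ← prefixLetters_succ, ← prefixLetters_succ,
      ← hW.prefixLetters_succ_of_notMem hn (hW.1.2 p hpW), hQ.1.prefixLetters_succ_of_mem hq]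
  have hcount := congrArg (Multiset.count (c (p + 1))) hsucc
  rw [Multiset.count_cons, Multiset.count_cons_self, Multiset.count_cons_of_ne (hQ.2 _ hq),
    Multiset.count_cons_of_ne (hP.2 p hp).symm] at hcount
  omega

end PrefixLetters

section Entangled

variable {ι : Type*} {n p : ℕ} {P : ι → Finset ℕ} {i : ι}

open Classical in
/-- The swaps of `P i` that overlap, on their right, a swap of some member of the family. For swap
permutations out of a common string, these are the swaps undone by the disentanglement. -/
noncomputable def entangledSwaps (P : ι → Finset ℕ) (i : ι) : Finset ℕ :=
  (P i).filter fun p => ∃ j, p + 1 ∈ P j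

theorem mem_entangledSwaps : p ∈ entangledSwaps P i ↔ p ∈ P i ∧ ∃ j, p + 1 ∈ P j := by
  simp [entangledSwaps]

theorem entangledSwaps_subset (P : ι → Finset ℕ) (i : ι) : entangledSwaps P i ⊆ P i :=
  fun _ hp => (mem_entangledSwaps.1 hp).1

theorem isSwapSet_sdiff_entangledSwaps_union (hP : ∀ i, ∀ p ∈ P i, p + 1 < n) (i j : ι) :
    IsSwapSet n ((P i \ entangledSwaps P i) ∪ (P j \ entangledSwaps P j)) := by
  have hremaining : ∀ p ∈ (P i \ entangledSwaps P i) ∪ (P j \ entangledSwaps P j),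
      p + 1 < n ∧ ∀ l, p + 1 ∉ P l := by
    simp only [Finset.mem_union, Finset.mem_sdiff, mem_entangledSwaps]
    grind
  have hsub : (P i \ entangledSwaps P i) ∪ (P j \ entangledSwaps P j) ⊆ P i ∪ P j :=
    Finset.union_subset_union Finset.sdiff_subset Finset.sdiff_subset
  refine ⟨fun p hp => (hremaining p hp).1, fun p hp hp' => ?_⟩
  rcases Finset.mem_union.1 (hsub hp') with hi | hj
  · exact (hremaining p hp).2 i hi
  · exact (hremaining p hp).2 j hj

end Entangled

theorem disentanglement_exists_general {ι : Type*} (n : ℕ) (s : ι → ℕ → α)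
    (hC : ∃ c : ℕ → α, ∀ j, SwMatching n c (s j)) :
    ∃ s' : ι → ℕ → α,
      (∀ i j, SwMatching n (s' i) (s' j)) ∧
      (∀ i, ∃ P : Finset ℕ, ValidTransform n P (s i) (s' i) ∧
        ∀ p ∈ P, ∀ t : ℕ → α, (∀ j, SwMatching n t (s j)) →
          ∀ V : Finset ℕ, ValidTransform n V t (s i) → p ∈ V) := by
  obtain ⟨c, hc⟩ := hC
  choose P hP using fun j => (hc j).exists_validTransform
  refine ⟨fun i => applySwaps (P i \ entangledSwaps P i) c, fun i j => ?_,
    fun i => ⟨entangledSwaps P i, (hP i).undo (entangledSwaps_subset P i), ?_⟩⟩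
  · exact swMatching_applySwaps
      (isSwapSet_sdiff_entangledSwaps_union (fun i => (hP i).1.1.1) i j) c
  · intro p hp t ht V hV
    obtain ⟨hpi, j, hpj⟩ := mem_entangledSwaps.1 hp
    obtain ⟨W, hW⟩ := ht j
    exact (hP i).mem_of_overlapping_swaps (hP j) hpi hpj hV.1 hW

/-- If `C_S` is nonempty (some length-`n` string matches every string
of `S`), then `S` admits a disentanglement: a family `s'` of length-`n` strings that are
pairwise matching, and such that each `s i` and `s' i` are matching via a valid swap
permutation containing only swaps necessary for `s i`. -/
theorem disentanglement_exists {α : Type u} (n k : ℕ) (s : Fin k → ℕ → α)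
    (hC : ∃ c : ℕ → α, ∀ j, SwMatching n c (s j)) :
    ∃ s' : Fin k → ℕ → α,
      (∀ i j, SwMatching n (s' i) (s' j)) ∧
      (∀ i, ∃ P : Finset ℕ, ValidTransform n P (s i) (s' i) ∧
        ∀ p ∈ P, NecessarySwap n s i p) :=
  disentanglement_exists_general n s hC
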